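/- Let K be a field of characteristic 0, L = K(α) the field of rational functions in one variable α over K, and let d : L → L be the unique K-derivation with d(α) = 1. Let r, s ∈ ℤ with s ≠ 0 and ν = r + s > 0, and set d_k = (Π_{i=0}^{k−1}(1 − iν))/s^k for k ≥ 1, d_0 = 1. Define δ_i : L → L for i ∈ ℤ_{≤0} by δ_{1−kν} = (d_k/k!)·d^k for integers k ≥ 1, and δ_i = 0 for all i ≤ 0 with i ≢ 1 (mod ν). Then the maps δ_i satisfy the Leibniz-type identity (★). -/

import Mathlib

noncomputable section

open scoped Classical

/-- The generalized binomial coefficient `binom n k` for an integer `n` and natural `k`;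
it equals `n (n-1) ⋯ (n-k+1) / k!` (an integer). -/
def zbinom (n : ℤ) (k : ℕ) : ℤ :=
  if 0 ≤ n then (n.toNat.choose k : ℤ) else (-1) ^ k * (((k : ℤ) - 1 - n).toNat.choose k : ℤ)

/-- The generalized binomial coefficient `a (a-1) ⋯ (a-k+1) / k!` in a field `K`
(of characteristic zero in all uses). -/
def gbinom {K : Type*} [Field K] (a : K) (k : ℕ) : K :=
  (∏ i ∈ Finset.range k, (a - (i : K))) / (k.factorial : K)

/-- Inverse Laurent series over `L`: formal sums `Σ_{i ∈ ℤ} a_i T^i` whose support is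
bounded above. -/
structure InvLaurent (L : Type*) [Zero L] where
  coeff : ℤ → L
  bdd' : ∃ N : ℤ, ∀ i : ℤ, N < i → coeff i = 0

namespace InvLaurent

variable {L : Type*} [Field L]

@[ext] theorem ext {f g : InvLaurent L} (h : ∀ i, f.coeff i = g.coeff i) : f = g := by
  cases f; cases g
  simp only [mk.injEq]
  funext i; exact h i

instance : Zero (InvLaurent L) := ⟨⟨fun _ => 0, ⟨0, fun _ _ => rfl⟩⟩⟩

instance : Add (InvLaurent L) :=
  ⟨fun f g => ⟨fun i => f.coeff i + g.coeff i, by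
    obtain ⟨N, hN⟩ := f.bdd'; obtain ⟨M, hM⟩ := g.bdd'
    exact ⟨max N M, fun i hi => by
      show f.coeff i + g.coeff i = 0
      rw [hN i (lt_of_le_of_lt (le_max_left _ _) hi),
        hM i (lt_of_le_of_lt (le_max_right _ _) hi), add_zero]⟩⟩⟩

instance : Neg (InvLaurent L) :=
  ⟨fun f => ⟨fun i => -f.coeff i, by
    obtain ⟨N, hN⟩ := f.bdd'
    exact ⟨N, fun i hi => by show -f.coeff i = 0; rw [hN i hi, neg_zero]⟩⟩⟩

@[simp] lemma coeff_zero (i : ℤ) : (0 : InvLaurent L).coeff i = 0 := rfl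
@[simp] lemma coeff_add (f g : InvLaurent L) (i : ℤ) :
    (f + g).coeff i = f.coeff i + g.coeff i := rfl
@[simp] lemma coeff_neg (f : InvLaurent L) (i : ℤ) : (-f).coeff i = -f.coeff i := rfl

instance : AddCommGroup (InvLaurent L) where
  add_assoc f g h := by ext i; simp [add_assoc]
  zero_add f := by ext i; simp
  add_zero f := by ext i; simp
  neg_add_cancel f := by ext i; simp
  add_comm f g := by ext i; simp [add_comm]
  nsmul := nsmulRec
  zsmul := zsmulRec

@[simp] lemma coeff_sub (f g : InvLaurent L) (i : ℤ) :
    (f - g).coeff i = f.coeff i - g.coeff i := by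
  rw [sub_eq_add_neg, coeff_add, coeff_neg, sub_eq_add_neg]

/-- The series `a T^n`. -/
def single (n : ℤ) (a : L) : InvLaurent L :=
  ⟨fun i => if i = n then a else 0, ⟨n, fun i hi => if_neg (by omega)⟩⟩

/-- The series `T^n`. -/
def T (L : Type*) [Field L] (n : ℤ) : InvLaurent L := single n 1

/-- Coefficientwise multiplication by a scalar `b ∈ L` on the left. -/
def lsmul (b : L) (f : InvLaurent L) : InvLaurent L :=
  ⟨fun i => b * f.coeff i, by
    obtain ⟨N, hN⟩ := f.bdd'
    exact ⟨N, fun i hi => by show b * f.coeff i = 0; rw [hN i hi, mul_zero]⟩⟩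

/-- The standard degree map, with values in `ℤ ∪ {-∞}`. -/
def deg (f : InvLaurent L) : WithBot ℤ :=
  if f = 0 then ⊥ else ↑(sSup {i : ℤ | f.coeff i ≠ 0})

lemma deg_eq_bot_iff (f : InvLaurent L) : deg f = ⊥ ↔ f = 0 := by
  unfold deg
  split
  · simpa
  · simp_all

lemma support_nonempty {f : InvLaurent L} (hf : f ≠ 0) :
    {i : ℤ | f.coeff i ≠ 0}.Nonempty := by
  by_contra h
  rw [Set.not_nonempty_iff_eq_empty] at h
  apply hf
  ext i
  have : i ∉ ({i : ℤ | f.coeff i ≠ 0}) := by rw [h]; exact Set.notMem_empty i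
  simpa using this

lemma support_bddAbove (f : InvLaurent L) : BddAbove {i : ℤ | f.coeff i ≠ 0} := by
  obtain ⟨N, hN⟩ := f.bdd'
  exact ⟨N, fun i hi => by by_contra h; exact hi (hN i (by omega))⟩

lemma le_deg {f : InvLaurent L} {i : ℤ} (h : f.coeff i ≠ 0) : (i : WithBot ℤ) ≤ deg f := by
  have hf : f ≠ 0 := by
    intro h0; rw [h0] at h; exact h rfl
  rw [deg, if_neg hf]
  exact_mod_cast le_csSup (support_bddAbove f) h

lemma deg_neg (f : InvLaurent L) : deg (-f) = deg f := by
  unfold deg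
  have h0 : -f = 0 ↔ f = 0 := by
    constructor
    · intro h; ext i
      have := congrArg (fun g => InvLaurent.coeff g i) h
      simp only [coeff_neg, coeff_zero, neg_eq_zero] at this
      simpa using this
    · intro h; rw [h]; ext i; simp
  have hs : {i : ℤ | (-f).coeff i ≠ 0} = {i : ℤ | f.coeff i ≠ 0} := by
    ext i; simp
  rw [hs]
  by_cases h : f = 0
  · rw [if_pos (h0.mpr h), if_pos h]
  · rw [if_neg (fun hh => h (h0.mp hh)), if_neg h]

lemma deg_add_le (f g : InvLaurent L) : deg (f + g) ≤ max (deg f) (deg g) := by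
  by_cases h : f + g = 0
  · rw [(deg_eq_bot_iff _).mpr h]; exact bot_le
  · rw [deg, if_neg h]
    have hne := support_nonempty h
    have : sSup {i : ℤ | (f + g).coeff i ≠ 0} ∈ {i : ℤ | (f + g).coeff i ≠ 0} := by
      obtain ⟨N, hN⟩ := support_bddAbove (f + g)
      obtain ⟨m, hm, hmax⟩ := Int.exists_greatest_of_bdd ⟨N, fun i hi => hN hi⟩ hne
      have : sSup {i : ℤ | (f + g).coeff i ≠ 0} = m :=
        le_antisymm (csSup_le hne hmax) (le_csSup (support_bddAbove _) hm)
      rw [this]; exact hm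
    set m := sSup {i : ℤ | (f + g).coeff i ≠ 0} with hm
    have hc : (f + g).coeff m ≠ 0 := this
    rw [coeff_add] at hc
    rcases (by by_contra hh; push_neg at hh; rw [hh.1, hh.2, add_zero] at hc; exact hc rfl :
        f.coeff m ≠ 0 ∨ g.coeff m ≠ 0) with hf | hg
    · exact le_trans (le_deg hf) (le_max_left _ _)
    · exact le_trans (le_deg hg) (le_max_right _ _)

/-- real-exponential of a degree value: `e^d`, with `e^{-∞} = 0`. -/
def edeg : WithBot ℤ → ℝ
  | ⊥ => 0
  | (n : ℤ) => Real.exp n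

lemma edeg_nonneg (d : WithBot ℤ) : 0 ≤ edeg d := by
  cases d with
  | bot => exact le_refl 0
  | coe n => exact le_of_lt (Real.exp_pos _)

lemma edeg_mono {d d' : WithBot ℤ} (h : d ≤ d') : edeg d ≤ edeg d' := by
  cases d with
  | bot => exact edeg_nonneg d'
  | coe n =>
    cases d' with
    | bot => exact absurd h (by simp)
    | coe m =>
      have : n ≤ m := by exact_mod_cast h
      exact Real.exp_le_exp.mpr (by exact_mod_cast this)

lemma edeg_eq_zero_iff (d : WithBot ℤ) : edeg d = 0 ↔ d = ⊥ := by
  cases d with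
  | bot => simp [edeg]
  | coe n =>
    simp only [edeg]
    constructor
    · intro h; exact absurd h (ne_of_gt (Real.exp_pos _))
    · intro h; exact absurd h (by simp)

noncomputable instance : MetricSpace (InvLaurent L) where
  dist f g := edeg (deg (f - g))
  dist_self f := by
    show edeg (deg (f - f)) = 0
    rw [sub_self, (deg_eq_bot_iff (0 : InvLaurent L)).mpr rfl]
    rfl
  dist_comm f g := by
    show edeg (deg (f - g)) = edeg (deg (g - f))
    have h : g - f = -(f - g) := by abel
    rw [h, deg_neg]
  dist_triangle f g h := by
    show edeg (deg (f - h)) ≤ edeg (deg (f - g)) + edeg (deg (g - h))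
    have h1 : f - h = (f - g) + (g - h) := by abel
    have h2 : deg (f - h) ≤ max (deg (f - g)) (deg (g - h)) := by
      rw [h1]; exact deg_add_le _ _
    calc edeg (deg (f - h)) ≤ edeg (max (deg (f - g)) (deg (g - h))) := edeg_mono h2
      _ ≤ edeg (deg (f - g)) + edeg (deg (g - h)) := by
          rcases max_cases (deg (f - g)) (deg (g - h)) with ⟨hm, _⟩ | ⟨hm, _⟩ <;> rw [hm]
          · exact le_add_of_nonneg_right (edeg_nonneg _)
          · exact le_add_of_nonneg_left (edeg_nonneg _)
  eq_of_dist_eq_zero := by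
    intro f g hd
    have hd' : edeg (deg (f - g)) = 0 := hd
    have : deg (f - g) = ⊥ := (edeg_eq_zero_iff _).mp hd'
    have := (deg_eq_bot_iff _).mp this
    exact sub_eq_zero.mp this

end InvLaurent

open InvLaurent

/-- A deformed Laurent series product on `L((T⁻¹))`:
an associative, distributive, jointly continuous multiplication which restricts to left
scalar multiplication by `L`, satisfies `T^i · T^j = T^{i+j}`, and is compatible with the
standard degree map. -/
structure DeformedProduct (L : Type*) [Field L] where
  mul : InvLaurent L → InvLaurent L → InvLaurent L
  mul_assoc : ∀ f g h, mul (mul f g) h = mul f (mul g h)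
  left_distrib : ∀ f g h, mul f (g + h) = mul f g + mul f h
  right_distrib : ∀ f g h, mul (f + g) h = mul f h + mul g h
  continuous_mul : Continuous fun p : InvLaurent L × InvLaurent L => mul p.1 p.2
  lsmul_eq : ∀ (b : L) (f : InvLaurent L), mul (single 0 b) f = lsmul b f
  T_mul_T : ∀ i j : ℤ, mul (T L i) (T L j) = T L (i + j)
  deg_mul : ∀ f g, deg (mul f g) = deg f + deg g

/-- `HasDelta μ δ` says that `T · a = a T + Σ_{i ≤ 0} δ_i(a) T^i` for all `a ∈ L`. -/
def HasDelta {L : Type*} [Field L] (μ : DeformedProduct L) (δ : ℤ → L → L) : Prop :=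
  ∀ (a : L) (i : ℤ), (μ.mul (T L 1) (single 0 a)).coeff i =
    if i = 1 then a else if i ≤ 0 then δ i a else 0

/-- Composition `δ_{j₁} ∘ ⋯ ∘ δ_{j_k}` along a list `[j₁, …, j_k]`. -/
def dcomp {L : Type*} [Field L] (δ : ℤ → L → L) : List ℤ → L → L
  | [], a => a
  | j :: js, a => δ j (dcomp δ js a)

/-- The Leibniz-type identity (★) for the family `δ_i`, `i ≤ 0`. -/
def LeibnizStar {L : Type*} [Field L] (δ : ℤ → L → L) : Prop :=
  ∀ i : ℤ, i ≤ 0 → ∀ a b : L,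
    δ i (a * b) = a * δ i b + δ i a * b +
      ∑ᶠ p : ℤ × List ℤ,
        if p.1 ≤ 0 ∧ p.2 ≠ [] ∧ (∀ j ∈ p.2, j ≤ 0) ∧
            p.2.sum - (p.2.length : ℤ) + p.1 = i
        then zbinom p.1 p.2.length • (δ p.1 a * dcomp δ p.2 b) else 0

end

noncomputable section

/-- The coefficient `d_k / k! = (∏_{i=0}^{k-1} (1 - iν)) / (s^k k!)` (with `ν = r + s`),
as an element of `K(α) = RatFunc K`. -/
def dCoeff (K : Type*) [Field K] (r s : ℤ) (k : ℕ) : RatFunc K :=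
  (∏ i ∈ Finset.range k, (1 - (i : RatFunc K) * (((r + s : ℤ) : ℤ) : RatFunc K))) /
    (((s : ℤ) : RatFunc K) ^ k * (k.factorial : RatFunc K))

/-- The family `δ_i : L → L` (`L = K(α)`): `δ_{1-kν} = (d_k/k!)·d^k` for `k ≥ 1`
(`ν = r + s`), and `δ_i = 0` for `i ≢ 1 (mod ν)`. -/
def deltaFamily (K : Type*) [Field K] (d : RatFunc K → RatFunc K) (r s : ℤ) :
    ℤ → RatFunc K → RatFunc K := fun i a =>
  if (r + s) ∣ (1 - i) ∧ 1 ≤ (1 - i) / (r + s) then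
    dCoeff K r s ((1 - i) / (r + s)).toNat * (d^[((1 - i) / (r + s)).toNat] a)
  else 0

/-!
Put `u k = binom(1/ν, k)`. Replacing `d` by `(ν/s) d` turns `(d_k/k!) d^k` into `u k d^k`, so the
`u k` are the coefficients of `E = (1 + X)^(1/ν)`. In (★) fix `l = 1 - mν` and let the indices
`j = 1 - kν` run over the compositions of `q`: expanding `E^l = (1 + (E - 1))^l`, one finds that
`∑ binom(l, length) ∏ u k` is the coefficient of `X^q` in `E^l = (1 + X)^(1/ν - m)`. The terms with
this `m` and `q` thus add up to `binom(1/ν, m) binom(1/ν - m, q) d^m a d^q b`, which is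
`u (m + q) binom(m + q, m) d^m a d^q b`, and (★) in degree `1 - nν` becomes the Leibniz rule for
`d^n (ab)`.
-/

open Finset PowerSeries

section PowerSeriesIdentities

theorem coeff_pow_eq_sum_composition {R : Type*} [CommSemiring R] {F : R⟦X⟧}
    (hF : constantCoeff F = 0) (k p : ℕ) :
    coeff p (F ^ k) =
      ∑ c : Composition p with c.length = k, (c.blocks.map fun j ↦ coeff j F).prod := by
  have pos_of_coeff_ne_zero {j : ℕ} (hj : coeff j F ≠ 0) : 0 < j :=
    Nat.pos_of_ne_zero fun h ↦ hj (by rw [h, coeff_zero_eq_constantCoeff_apply, hF])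
  have pow_eq_prod : F ^ k = ∏ _i : Fin k, F := by simp
  rw [pow_eq_prod, coeff_prod]
  refine sum_bij_ne_zero (fun l hl hne ↦ ⟨List.ofFn l, ?_, ?_⟩) ?_ ?_ ?_ ?_
  · intro j hj
    obtain ⟨i, rfl⟩ := List.mem_ofFn.1 hj
    exact pos_of_coeff_ne_zero fun h ↦ hne (prod_eq_zero (mem_univ i) h)
  · rw [List.sum_ofFn]
    exact (mem_finsuppAntidiag.1 hl).1
  · intro l hl hne
    simp [Composition.length]
  · intro l₁ _ _ l₂ _ _ h
    exact DFunLike.coe_injective (List.ofFn_injective (congrArg Composition.blocks h))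
  · intro c hc hne
    obtain rfl := (mem_filter.1 hc).2
    refine ⟨Finsupp.equivFunOnFinite.symm c.blocksFun, ?_, ?_, ?_⟩
    · simp [mem_finsuppAntidiag]
    · rwa [← c.ofFn_blocksFun, List.map_ofFn, List.prod_ofFn] at hne
    · exact Composition.ext c.ofFn_blocksFun
  · intro l _ _
    simp [List.map_ofFn, List.prod_ofFn]

theorem coeff_subst_eq_sum_composition {R S : Type*} [CommRing R] [CommRing S] [Algebra R S]
    (G : R⟦X⟧) {F : S⟦X⟧} (hF : constantCoeff F = 0) (p : ℕ) :
    coeff p (G.subst F) =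
      ∑ c : Composition p, coeff c.length G • (c.blocks.map fun j ↦ coeff j F).prod := by
  have support_subset : (Function.support fun k ↦ coeff k G • coeff p (F ^ k)) ⊆
      (range (p + 1) : Set ℕ) := by
    intro k hk
    rw [Function.mem_support, coeff_pow_eq_sum_composition hF] at hk
    obtain ⟨c, hc, -⟩ := exists_ne_zero_of_sum_ne_zero (right_ne_zero_of_smul hk)
    have length_eq : c.length = k := (mem_filter.1 hc).2
    exact mem_coe.2 (mem_range.2 (Nat.lt_succ_of_le (length_eq ▸ c.length_le)))
  have length_mem (c : Composition p) (_ : c ∈ univ) : c.length ∈ range (p + 1) :=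
    mem_range.2 (Nat.lt_succ_of_le c.length_le)
  rw [coeff_subst' (HasSubst.of_constantCoeff_zero' hF),
    finsum_eq_sum_of_support_subset _ support_subset, ← sum_fiberwise_of_maps_to length_mem]
  refine sum_congr rfl fun k _ ↦ ?_
  rw [coeff_pow_eq_sum_composition hF, smul_sum]
  refine sum_congr rfl fun c hc ↦ ?_
  rw [(mem_filter.1 hc).2]

/-- The homomorphism `r ↦ (1 + X) ^ r` from the additive group of a binomial ring to the
multiplicative monoid of power series. -/
def binomialSeriesHom (R A : Type*) [CommRing R] [BinomialRing R] [CommRing A] [Algebra R A] :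
    Multiplicative R →* A⟦X⟧ where
  toFun r := binomialSeries A r.toAdd
  map_one' := binomialSeries_zero
  map_mul' r s := binomialSeries_add r.toAdd s.toAdd

variable {R : Type*} [CommRing R] [BinomialRing R]

-- Both sides are homomorphisms from `ℤ` to power series in the exponent `N`, equal at `N = 1`.
theorem binomialSeries_zsmul (N : ℤ) (x : R) :
    binomialSeries R (N • x) = (binomialSeries ℤ N).subst (binomialSeries R x - 1) := by
  have hasSubst : HasSubst (binomialSeries R x - 1) :=
    HasSubst.of_constantCoeff_zero' (by simp)
  let substHom : ℤ⟦X⟧ →ₐ[ℤ] R⟦X⟧ := substAlgHom hasSubst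
  have substHom_apply (G : ℤ⟦X⟧) : substHom G = G.subst (binomialSeries R x - 1) :=
    congrFun (coe_substAlgHom hasSubst) G
  have substHom_one_add_X : substHom (binomialSeries ℤ (1 : ℤ)) = binomialSeries R x := by
    have binomialSeries_one : binomialSeries ℤ (1 : ℤ) = 1 + X := by
      simpa using binomialSeries_nat (R := ℤ) (A := ℤ) 1
    rw [binomialSeries_one, map_add, map_one, substHom_apply, subst_X hasSubst]
    exact add_sub_cancel 1 (binomialSeries R x)
  have homs_eq : (binomialSeriesHom R R).comp (zmultiplesHom R x).toMultiplicative =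
      (substHom : ℤ⟦X⟧ →* R⟦X⟧).comp (binomialSeriesHom ℤ ℤ) :=
    MonoidHom.ext_mint (by simp [binomialSeriesHom, substHom_one_add_X])
  rw [← substHom_apply]
  exact DFunLike.congr_fun homs_eq (Multiplicative.ofAdd N)

theorem choose_zsmul_eq_sum_composition (N : ℤ) (x : R) (p : ℕ) :
    Ring.choose (N • x) p =
      ∑ c : Composition p, Ring.choose N c.length • (c.blocks.map (Ring.choose x)).prod := by
  have coeff_sub_one {p : ℕ} (c : Composition p) :
      (c.blocks.map fun j ↦ coeff j (binomialSeries R x - 1)) = c.blocks.map (Ring.choose x) :=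
    List.map_congr_left fun j hj ↦ by simp [coeff_one, (c.blocks_pos hj).ne']
  have coeff_eq := congrArg (coeff p) (binomialSeries_zsmul N x)
  rw [coeff_subst_eq_sum_composition _ (by simp)] at coeff_eq
  simpa only [coeff_sub_one, binomialSeries_coeff, smul_eq_mul, mul_one] using coeff_eq

theorem choose_mul_sum_composition_eq {ν : ℤ} {x : R} (hx : ν * x = 1) (m p : ℕ) :
    Ring.choose x m * ∑ c : Composition p,
        Ring.choose (1 - m * ν) c.length • (c.blocks.map (Ring.choose x)).prod =
      (m + p).choose m • Ring.choose x (m + p) := by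
  have exponent_eq : (1 - m * ν) • x = x - m := by
    rw [zsmul_eq_mul]
    push_cast
    linear_combination (-(m : R)) * hx
  rw [← choose_zsmul_eq_sum_composition, exponent_eq,
    Ring.choose_smul_choose x (Nat.le_add_right m p), Nat.add_sub_cancel_left]

end PowerSeriesIdentities

theorem zbinom_eq_choose (n : ℤ) (k : ℕ) : zbinom n k = Ring.choose n k := by
  unfold zbinom
  split_ifs with hn
  · lift n to ℕ using hn
    simp [Ring.choose_natCast]
  · obtain ⟨m, hm⟩ : ∃ m : ℕ, (k : ℤ) - 1 - n = m := ⟨(k - 1 - n).toNat, by omega⟩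
    have upper_negation := Ring.choose_neg (-n) k
    rw [neg_neg, show -n + k - 1 = (m : ℤ) by omega, Ring.choose_natCast, Units.smul_def,
      smul_eq_mul] at upper_negation
    rw [hm, upper_negation, Int.toNat_natCast, ← Int.cast_negOnePow_natCast ℤ k, Int.cast_id]

theorem gbinom_eq_choose {K : Type*} [Field K] [CharZero K] (a : K) (k : ℕ) :
    gbinom a k = Ring.choose a k := by
  have smeval_eq_prod : (descPochhammer ℤ k).smeval a = ∏ i ∈ range k, (a - i) := by
    rw [← descPochhammer_eval_eq_prod_range, ← descPochhammer_map (Int.castRingHom K),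
      Polynomial.eval_map, ← Polynomial.aeval_eq_smeval]
    rfl
  rw [gbinom, Ring.choose_eq_smul, smeval_eq_prod, smul_eq_mul, inv_mul_eq_div]

section Derivation

variable {R A : Type*} [CommRing R] [CommRing A] [Algebra R A] (d : Derivation R A A)

theorem derivation_iterate_smul (n : ℕ) (c : R) (a : A) : d^[n] (c • a) = c • d^[n] a :=
  Function.Commute.iterate_left (f := d) (g := (c • ·)) (d.map_smul c) n a

theorem derivation_smul_iterate (n : ℕ) (c : R) (a : A) : (c • d)^[n] a = c ^ n • d^[n] a := by
  induction n with
  | zero => simp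
  | succ n ih =>
    rw [Function.iterate_succ_apply', ih, Function.iterate_succ_apply', Derivation.smul_apply,
      Derivation.map_smul, smul_smul, pow_succ']

theorem derivation_iterate_mul (n : ℕ) (a b : A) :
    d^[n] (a * b) = ∑ x ∈ antidiagonal n, n.choose x.1 • (d^[x.1] a * d^[x.2] b) := by
  induction n with
  | zero => simp
  | succ n ih =>
    rw [sum_antidiagonal_choose_succ_nsmul (fun i j ↦ d^[i] a * d^[j] b),
      Function.iterate_succ_apply', ih, map_sum, ← sum_add_distrib]
    refine sum_congr rfl fun x hx ↦ ?_
    have add_eq := HasAntidiagonal.mem_antidiagonal.1 hx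
    rw [map_nsmul, d.leibniz, Nat.choose_symm_of_eq_add add_eq.symm,
      Function.iterate_succ_apply', Function.iterate_succ_apply', nsmul_add, smul_eq_mul,
      smul_eq_mul, mul_comm (d^[x.2] b)]

end Derivation

theorem sum_antidiagonal_eq_add_add_sum_pos {M : Type*} [AddCommMonoid M] {n : ℕ} (hn : 0 < n)
    (f : ℕ × ℕ → M) :
    ∑ x ∈ antidiagonal n, f x =
      f (0, n) + f (n, 0) + ∑ x ∈ antidiagonal n with 0 < x.1 ∧ 0 < x.2, f x := by
  have endpoints : {x ∈ antidiagonal n | ¬(0 < x.1 ∧ 0 < x.2)} = {(0, n), (n, 0)} := by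
    ext ⟨i, j⟩
    simp only [mem_filter, HasAntidiagonal.mem_antidiagonal, mem_insert, mem_singleton,
      Prod.mk.injEq]
    omega
  rw [← sum_filter_not_add_sum_filter _ (fun x : ℕ × ℕ ↦ 0 < x.1 ∧ 0 < x.2), endpoints,
    sum_pair (by simp [hn.ne])]

section LeibnizStar

/-- The index set of the inner sum of (★) in degree `i`; an index `(l, j_1, …, j_k)` with `k ≥ 1`
is encoded as the pair `(l, [j_1, …, j_k])`. -/
def starIndices (i : ℤ) : Set (ℤ × List ℤ) :=
  {p | p.1 ≤ 0 ∧ p.2 ≠ [] ∧ (∀ j ∈ p.2, j ≤ 0) ∧ p.2.sum - (p.2.length : ℤ) + p.1 = i}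

theorem leibnizStar_iff {L : Type*} [Field L] (δ : ℤ → L → L) :
    LeibnizStar δ ↔ ∀ i ≤ 0, ∀ a b, δ i (a * b) = a * δ i b + δ i a * b +
      ∑ᶠ p ∈ starIndices i, zbinom p.1 p.2.length • (δ p.1 a * dcomp δ p.2 b) := by
  simp only [LeibnizStar, starIndices, finsum_eq_if, Set.mem_ofPred_eq]

theorem exists_apply_ne_zero_of_dcomp_ne_zero {L : Type*} [Field L] {δ : ℤ → L → L}
    (hδ : ∀ i, δ i 0 = 0) {l : List ℤ} {b : L} (hl : dcomp δ l b ≠ 0) :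
    ∀ j ∈ l, ∃ a, δ j a ≠ 0 := by
  induction l with
  | nil => simp
  | cons j l ih =>
    have tail_ne_zero : dcomp δ l b ≠ 0 := fun h ↦ hl (by rw [dcomp, h, hδ])
    exact List.forall_mem_cons.2 ⟨⟨_, hl⟩, ih tail_ne_zero⟩

end LeibnizStar

section Progression

/-- The index `1 - k ν` of the `k`-th map in a family supported on `1 - ν ℤ`. -/
def progressionIndex (ν : ℤ) (k : ℕ) : ℤ := 1 - k * ν

/-- The family of maps with `D k` in degree `1 - k ν` for `k ≥ 1` and `0` in all other degrees. -/
def progressionFamily {L : Type*} [Zero L] (ν : ℤ) (D : ℕ → L → L) (i : ℤ) (a : L) : L :=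
  if ν ∣ 1 - i ∧ 1 ≤ (1 - i) / ν then D ((1 - i) / ν).toNat a else 0

variable {ν : ℤ}

theorem progressionIndex_injective (hν : ν ≠ 0) : Function.Injective (progressionIndex ν) := by
  intro k k' h
  have mul_eq_mul : (k : ℤ) * ν = k' * ν := sub_right_injective h
  exact_mod_cast mul_right_cancel₀ hν mul_eq_mul

theorem progressionIndex_nonpos (hν : 0 < ν) {k : ℕ} (hk : 0 < k) : progressionIndex ν k ≤ 0 := by
  have mul_pos : 0 < (k : ℤ) * ν := by positivity
  unfold progressionIndex
  omega

theorem sum_map_progressionIndex_sub_length (ν : ℤ) (l : List ℕ) :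
    (l.map (progressionIndex ν)).sum - l.length = -(l.sum * ν) := by
  induction l with
  | nil => simp
  | cons k l ih =>
    simp only [List.map_cons, List.sum_cons, List.length_cons, progressionIndex]
    rw [Nat.cast_add_one, Nat.cast_add]
    linear_combination ih

theorem progression_mem_starIndices_iff (hν : 0 < ν) {m : ℕ} (hm : 0 < m) {l : List ℕ}
    (hl : ∀ k ∈ l, 0 < k) {i : ℤ} :
    (progressionIndex ν m, l.map (progressionIndex ν)) ∈ starIndices i ↔
      l ≠ [] ∧ progressionIndex ν (m + l.sum) = i := by
  have parts_nonpos (k : ℕ) (hk : k ∈ l) : progressionIndex ν k ≤ 0 :=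
    progressionIndex_nonpos hν (hl k hk)
  have degree_eq : (l.map (progressionIndex ν)).sum - l.length + progressionIndex ν m =
      progressionIndex ν (m + l.sum) := by
    rw [sum_map_progressionIndex_sub_length]
    unfold progressionIndex
    push_cast
    ring
  simp +contextual [starIndices, progressionIndex_nonpos hν hm, parts_nonpos, degree_eq]

section Family

variable {L : Type*} [Zero L] {D : ℕ → L → L}

theorem progressionFamily_progressionIndex (hν : ν ≠ 0) {k : ℕ} (hk : 0 < k) (a : L) :
    progressionFamily ν D (progressionIndex ν k) a = D k a := by
  have one_sub : 1 - progressionIndex ν k = k * ν := sub_sub_cancel 1 _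
  have one_le : (1 : ℤ) ≤ k := by exact_mod_cast hk
  simp [progressionFamily, one_sub, Int.mul_ediv_cancel _ hν, one_le]

theorem exists_eq_progressionIndex_of_ne_zero {i : ℤ} {a : L}
    (h : progressionFamily ν D i a ≠ 0) : ∃ k, 0 < k ∧ progressionIndex ν k = i := by
  obtain ⟨hdvd, hle⟩ : ν ∣ 1 - i ∧ 1 ≤ (1 - i) / ν := by
    by_contra hcond
    exact h (if_neg hcond)
  refine ⟨((1 - i) / ν).toNat, by omega, ?_⟩
  rw [progressionIndex, Int.toNat_of_nonneg (by omega), Int.ediv_mul_cancel hdvd, sub_sub_cancel]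

theorem progressionFamily_zero (hD : ∀ k, D k 0 = 0) (i : ℤ) : progressionFamily ν D i 0 = 0 := by
  simp [progressionFamily, hD]

end Family

variable {L : Type*} [Field L] {D : ℕ → L → L}

theorem exists_eq_map_progressionIndex_of_dcomp_ne_zero (hD : ∀ k, D k 0 = 0) {l : List ℤ} {b : L}
    (hl : dcomp (progressionFamily ν D) l b ≠ 0) :
    ∃ l' : List ℕ, (∀ k ∈ l', 0 < k) ∧ l'.map (progressionIndex ν) = l := by
  have parts (j : ℤ) (hj : j ∈ l) : ∃ k : ℕ+, progressionIndex ν k = j := by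
    obtain ⟨a, ha⟩ :=
      exists_apply_ne_zero_of_dcomp_ne_zero (progressionFamily_zero hD) hl j hj
    obtain ⟨k, hk, rfl⟩ := exists_eq_progressionIndex_of_ne_zero ha
    exact ⟨⟨k, hk⟩, rfl⟩
  obtain ⟨l', rfl⟩ : l ∈ Set.range (List.map fun k : ℕ+ ↦ progressionIndex ν k) := by
    rw [Set.range_list_map]
    exact parts
  exact ⟨l'.map (↑), by simp, by simp⟩

theorem exists_eq_progression_of_star_term_ne_zero (hD : ∀ k, D k 0 = 0) {p : ℤ × List ℤ} {a b : L}
    (h : zbinom p.1 p.2.length •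
      (progressionFamily ν D p.1 a * dcomp (progressionFamily ν D) p.2 b) ≠ 0) :
    ∃ (m : ℕ) (l : List ℕ), 0 < m ∧ (∀ k ∈ l, 0 < k) ∧
      (progressionIndex ν m, l.map (progressionIndex ν)) = p := by
  have factors_ne_zero := right_ne_zero_of_smul h
  obtain ⟨m, hm, hm_eq⟩ :=
    exists_eq_progressionIndex_of_ne_zero (left_ne_zero_of_mul factors_ne_zero)
  obtain ⟨l, hl, hl_eq⟩ :=
    exists_eq_map_progressionIndex_of_dcomp_ne_zero hD (right_ne_zero_of_mul factors_ne_zero)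
  exact ⟨m, l, hm, hl, Prod.ext hm_eq hl_eq⟩

/-- The index of (★) attached to `m` and a composition of `q`, where `y = ⟨(m, q), c⟩`. -/
def compositionIndex (ν : ℤ) (y : Σ x : ℕ × ℕ, Composition x.2) : ℤ × List ℤ :=
  (progressionIndex ν y.1.1, y.2.blocks.map (progressionIndex ν))

theorem compositionIndex_injective (hν : ν ≠ 0) : Function.Injective (compositionIndex ν) := by
  rintro ⟨⟨m, q⟩, c⟩ ⟨⟨m', q'⟩, c'⟩ h
  obtain ⟨hm, hblocks⟩ := Prod.mk.inj h
  obtain rfl : m = m' := progressionIndex_injective hν hm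
  have blocks_eq : c.blocks = c'.blocks :=
    (progressionIndex_injective hν).list_map hblocks
  obtain rfl : q = q' :=
    c.blocks_sum.symm.trans ((congrArg List.sum blocks_eq).trans c'.blocks_sum)
  obtain rfl : c = c' := Composition.ext blocks_eq
  rfl

/-- The pairs of a positive integer `m` and a composition of a positive integer `q`, where
`m + q = n`. -/
def splitCompositions (n : ℕ) : Finset (Σ x : ℕ × ℕ, Composition x.2) :=
  {x ∈ antidiagonal n | 0 < x.1 ∧ 0 < x.2}.sigma fun _ ↦ univ

theorem progression_mem_image_compositionIndex_iff (hν : ν ≠ 0) {m n : ℕ} (hm : 0 < m)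
    {l : List ℕ} (hl : ∀ k ∈ l, 0 < k) :
    (progressionIndex ν m, l.map (progressionIndex ν)) ∈
        (splitCompositions n).image (compositionIndex ν) ↔ l ≠ [] ∧ m + l.sum = n := by
  let y : Σ x : ℕ × ℕ, Composition x.2 := ⟨(m, l.sum), ⟨l, fun {k} hk ↦ hl k hk, rfl⟩⟩
  have sum_pos_iff : 0 < l.sum ↔ l ≠ [] := by
    rw [Nat.pos_iff_ne_zero, ne_eq, ne_eq, ← y.2.blocks_eq_nil]
  change compositionIndex ν y ∈ _ ↔ _
  rw [(compositionIndex_injective hν).mem_finset_image]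
  simp [splitCompositions, y, hm, sum_pos_iff, and_comm]

theorem finsum_starIndices_progressionFamily (hν : 0 < ν) (hD : ∀ k, D k 0 = 0) (n : ℕ) (a b : L) :
    ∑ᶠ p ∈ starIndices (progressionIndex ν n), zbinom p.1 p.2.length •
        (progressionFamily ν D p.1 a * dcomp (progressionFamily ν D) p.2 b) =
      ∑ x ∈ antidiagonal n with 0 < x.1 ∧ 0 < x.2, ∑ c : Composition x.2,
        zbinom (progressionIndex ν x.1) c.length •
          (D x.1 a * dcomp (progressionFamily ν D) (c.blocks.map (progressionIndex ν)) b) := by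
  rw [finsum_mem_inter_support_eq' _ (starIndices (progressionIndex ν n))
      ((splitCompositions n).image (compositionIndex ν)), finsum_mem_coe_finset,
    sum_image (compositionIndex_injective hν.ne').injOn, splitCompositions, sum_sigma]
  · refine sum_congr rfl fun x hx ↦ sum_congr rfl fun c _ ↦ ?_
    have hm := (mem_filter.1 hx).2.1
    simp only [compositionIndex, List.length_map, Composition.blocks_length,
      progressionFamily_progressionIndex hν.ne' hm]
  · intro p hp
    obtain ⟨m, l, hm, hl, rfl⟩ := exists_eq_progression_of_star_term_ne_zero hD hp
    rw [mem_coe, progression_mem_starIndices_iff hν hm hl,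
      progression_mem_image_compositionIndex_iff hν.ne' hm hl,
      (progressionIndex_injective hν.ne').eq_iff]

theorem leibnizStar_progressionFamily (hν : 0 < ν) (hD : ∀ k, D k 0 = 0)
    (h : ∀ n, 0 < n → ∀ a b, D n (a * b) = a * D n b + D n a * b +
      ∑ x ∈ antidiagonal n with 0 < x.1 ∧ 0 < x.2, ∑ c : Composition x.2,
        zbinom (progressionIndex ν x.1) c.length •
          (D x.1 a * dcomp (progressionFamily ν D) (c.blocks.map (progressionIndex ν)) b)) :
    LeibnizStar (progressionFamily ν D) := by
  rw [leibnizStar_iff]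
  intro i _ a b
  by_cases hi : ∃ n, 0 < n ∧ progressionIndex ν n = i
  · obtain ⟨n, hn, rfl⟩ := hi
    simp only [finsum_starIndices_progressionFamily hν hD,
      progressionFamily_progressionIndex hν.ne' hn, h n hn]
  · have family_eq_zero (a : L) : progressionFamily ν D i a = 0 :=
      not_not.1 fun hne ↦ hi (exists_eq_progressionIndex_of_ne_zero hne)
    rw [finsum_mem_eq_zero_of_forall_eq_zero]
    · simp [family_eq_zero]
    · intro p hp
      by_contra hne
      obtain ⟨m, l, hm, hl, rfl⟩ := exists_eq_progression_of_star_term_ne_zero hD hne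
      exact hi ⟨m + l.sum, by omega, ((progression_mem_starIndices_iff hν hm hl).1 hp).2⟩

end Progression

section BinomialFamily

variable {R L : Type*} [CommRing R] [Field L] [Algebra R L]
  (d : Derivation R L L) {ν : ℤ}

theorem dcomp_progressionFamily_smul_iterate (hν : ν ≠ 0) (u : ℕ → R) {l : List ℕ}
    (hl : ∀ k ∈ l, 0 < k) (b : L) :
    dcomp (progressionFamily ν fun k a ↦ u k • d^[k] a) (l.map (progressionIndex ν)) b =
      (l.map u).prod • d^[l.sum] b := by
  induction l with
  | nil => simp [dcomp]
  | cons k l ih =>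
    obtain ⟨hk, hl⟩ := List.forall_mem_cons.1 hl
    rw [List.map_cons, dcomp, ih hl, progressionFamily_progressionIndex hν hk,
      derivation_iterate_smul, smul_smul, ← Function.iterate_add_apply, List.map_cons,
      List.prod_cons, List.sum_cons]

variable [BinomialRing R]

theorem sum_composition_star_term (hν : ν ≠ 0) {x : R} (hx : ν * x = 1) (m q : ℕ) (a b : L) :
    ∑ c : Composition q, zbinom (progressionIndex ν m) c.length •
        ((Ring.choose x m • d^[m] a) *
          dcomp (progressionFamily ν fun k a ↦ Ring.choose x k • d^[k] a)
            (c.blocks.map (progressionIndex ν)) b) =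
      Ring.choose x (m + q) • (m + q).choose m • (d^[m] a * d^[q] b) := by
  have term_eq (c : Composition q) : zbinom (progressionIndex ν m) c.length •
        ((Ring.choose x m • d^[m] a) *
          dcomp (progressionFamily ν fun k a ↦ Ring.choose x k • d^[k] a)
            (c.blocks.map (progressionIndex ν)) b) =
      (Ring.choose x m * Ring.choose (1 - m * ν) c.length •
        (c.blocks.map (Ring.choose x)).prod) • (d^[m] a * d^[q] b) := by
    rw [dcomp_progressionFamily_smul_iterate d hν _ (fun k hk ↦ c.blocks_pos hk), c.blocks_sum,
      zbinom_eq_choose, smul_mul_smul_comm, ← smul_assoc, mul_smul_comm, progressionIndex]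
  rw [sum_congr rfl fun c _ ↦ term_eq c, ← sum_smul, ← mul_sum, choose_mul_sum_composition_eq hx,
    smul_assoc, smul_comm]

theorem deltaFamily_leibnizStar_general (hν : 0 < ν) {x : R} (hx : ν * x = 1) :
    LeibnizStar (progressionFamily ν fun k a ↦ Ring.choose x k • d^[k] a) := by
  refine leibnizStar_progressionFamily hν (fun k ↦ by rw [iterate_map_zero, smul_zero])
    fun n hn a b ↦ ?_
  rw [derivation_iterate_mul, sum_antidiagonal_eq_add_add_sum_pos hn, smul_add, smul_add, smul_sum]
  congr 1
  · simp
  · refine sum_congr rfl fun y hy ↦ ?_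
    rw [sum_composition_star_term d hν.ne' hx,
      HasAntidiagonal.mem_antidiagonal.1 (mem_filter.1 hy).1]

end BinomialFamily

theorem dCoeff_eq_algebraMap {K : Type*} [Field K] [CharZero K] {r s : ℤ} (hν : r + s ≠ 0)
    (k : ℕ) :
    dCoeff K r s k = algebraMap K (RatFunc K)
      (Ring.choose ((r + s : ℤ) : K)⁻¹ k * (((r + s : ℤ) : K) / s) ^ k) := by
  set ν : ℤ := r + s
  have dCoeff_eq : dCoeff K r s k = algebraMap K (RatFunc K)
      ((∏ i ∈ range k, (1 - i * (ν : K))) / (s ^ k * k.factorial)) := by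
    simp [dCoeff, ν]
  have factor_eq (i : ℕ) : 1 - i * (ν : K) = ((ν : K)⁻¹ - i) * ν := by
    rw [sub_mul, inv_mul_cancel₀ (Int.cast_ne_zero.2 hν)]
  simp only [dCoeff_eq, factor_eq, prod_mul_distrib, prod_const, card_range]
  rw [← gbinom_eq_choose, gbinom, div_pow, div_mul_div_comm, mul_comm (s ^ k : K)]

theorem deltaFamily_eq_progressionFamily {K : Type*} [Field K] [CharZero K]
    (d : Derivation K (RatFunc K) (RatFunc K)) {r s : ℤ} (hν : r + s ≠ 0) :
    deltaFamily K d r s = progressionFamily (r + s) fun k a ↦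
      Ring.choose ((r + s : ℤ) : K)⁻¹ k • ((((r + s : ℤ) : K) / s) • d)^[k] a := by
  have map_eq (k : ℕ) (a : RatFunc K) : dCoeff K r s k * d^[k] a =
      Ring.choose ((r + s : ℤ) : K)⁻¹ k • ((((r + s : ℤ) : K) / s) • d)^[k] a := by
    rw [dCoeff_eq_algebraMap hν, derivation_smul_iterate, smul_smul, Algebra.smul_def]
  simp only [← map_eq]
  rfl

/-- for a field `K` of characteristic `0`, `L = K(α)`, the `K`-derivation `d`
of `L` with `d(α) = 1`, and `r, s ∈ ℤ` with `s ≠ 0` and `ν = r + s > 0`, the maps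
`δ_{1-kν} = (d_k/k!)·d^k` (`k ≥ 1`), `δ_i = 0` otherwise, satisfy the Leibniz-type
identity (★). -/
theorem deltaFamily_leibnizStar (K : Type*) [Field K] [CharZero K]
    (d : Derivation K (RatFunc K) (RatFunc K)) (hd : d RatFunc.X = 1)
    (r s : ℤ) (hs : s ≠ 0) (hν : 0 < r + s) :
    LeibnizStar (deltaFamily K (⇑d) r s) := by
  rw [deltaFamily_eq_progressionFamily d hν.ne']
  exact deltaFamily_leibnizStar_general _ hν (mul_inv_cancel₀ (Int.cast_ne_zero.2 hν.ne'))

end
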